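/- arXiv:2509.14529 — 2 statements merged into one kernel-verified Lean document; each statement's English description precedes it below -/
import Mathlib

section
/- Chen–Hermite balancing identities (derived in the proof of Theorem 5.2): Let (Ω, 𝓕, ℙ) be a probability space, T > 0, let X_t : Ω → ℝ (t ∈ [0,T]) be random variables and g : [0,T] → ℝ a function. Assume there is a constant C > 0 with 𝔼[|X_t − X_s|^n] ≤ 2·n!·C^n for all n ∈ ℕ and all 0 ≤ s ≤ t ≤ T, and that 𝔼[H_n(X_t − X_s, g(t) − g(s))] = 0 for every integer n ≥ 1 and all 0 ≤ s ≤ t ≤ T. Then for all 0 ≤ s ≤ u ≤ t ≤ T and every integer n ≥ 2: ∑_{i=1}^{n−1} 𝔼[ H_i(X_u − X_s, g(u) − g(s)) · H_{n−i}(X_t − X_u, g(t) − g(u)) ] = 0. -/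
open MeasureTheory Finset

/-- `H_n(a,b) := ∑_{p+2q=n} a^p b^q / (p! q!)`; `n!·H_n(u,−1/2)` is the `n`-th
probabilists' Hermite polynomial at `u`. -/
noncomputable def hermiteH (n : ℕ) (a b : ℝ) : ℝ :=
  ∑ pq ∈ (Finset.range (n + 1) ×ˢ Finset.range (n + 1)).filter
      (fun pq => pq.1 + 2 * pq.2 = n),
    a ^ pq.1 * b ^ pq.2 / ((Nat.factorial pq.1 : ℝ) * (Nat.factorial pq.2 : ℝ))

/-!
Generating functions give Chen's identity
`H_n(a + c, b + d) = ∑_{i + j = n} H_i(a, b) * H_j(c, d)`. Evaluated at two consecutive increments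
`D`, `E` and integrated, it yields the claim, because its left-hand side and its two extreme terms
have mean zero. The difficulty is measurability: the hypotheses make only `|D|`, `|E|` and
`|D + E|` measurable, hence only those functions of `(D, E)` that are invariant under
`(x, y) ↦ (-x, -y)`. The products `H_i(D, b) * H_j(E, d)` with `i + j = n` all have the parity of
`n`, so the product of any two of them is measurable. If one of them is measurable and almost
everywhere nonzero, then all are, and the integration is legitimate; if none is measurable, every
integral is `0` by convention.

Almost sure nonvanishing holds because the even moments of `D` are those of a centered Gaussian of
variance `-2 * b`: the law of `|D|` has the same symmetrization as that Gaussian. So `|D|` has no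
atoms when `b ≠ 0`, and `D` avoids the finitely many roots of `H_i(·, b)`. When `b = 0`, `D`
vanishes almost surely and every term is zero.
-/

section HermitePolynomials

lemma hermiteH_zero (a b : ℝ) : hermiteH 0 a b = 1 := by
  simp [hermiteH, Finset.sum_filter]

lemma hermiteH_zero_right (n : ℕ) (a : ℝ) : hermiteH n a 0 = a ^ n / n.factorial := by
  rw [hermiteH, Finset.sum_eq_single (n, 0)]
  · simp
  · rintro ⟨p, q⟩ hpq hne
    have hq : q ≠ 0 := by
      rintro rfl
      simp_all
    simp [hq]
  · simp

lemma hermiteH_two_mul_zero_left (k : ℕ) (b : ℝ) :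
    hermiteH (2 * k) 0 b = b ^ k / k.factorial := by
  rw [hermiteH, Finset.sum_eq_single (0, k)]
  · simp
  · rintro ⟨p, q⟩ hpq hne
    have hp : p ≠ 0 := by
      rintro rfl
      simp_all
    simp [hp]
  · grind

lemma hermiteH_neg_left (n : ℕ) (a b : ℝ) :
    hermiteH n (-a) b = (-1) ^ n * hermiteH n a b := by
  simp only [hermiteH, Finset.mul_sum]
  refine Finset.sum_congr rfl fun x hx => ?_
  rw [← (mem_filter.1 hx).2, neg_pow, pow_add, (even_two_mul x.2).neg_one_pow]
  ring

lemma abs_hermiteH_le (n : ℕ) (a b : ℝ) : |hermiteH n a b| ≤ hermiteH n |a| |b| := by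
  refine (Finset.abs_sum_le_sum_abs _ _).trans_eq (Finset.sum_congr rfl fun x _ => ?_)
  simp only [abs_div, abs_mul, abs_pow, Nat.abs_cast]

lemma continuous_hermiteH (n : ℕ) (b : ℝ) : Continuous fun a => hermiteH n a b := by
  unfold hermiteH
  fun_prop

lemma exists_polynomial_eval_eq_hermiteH (n : ℕ) (b : ℝ) :
    ∃ p : Polynomial ℝ, p ≠ 0 ∧ ∀ a, p.eval a = hermiteH n a b := by
  set p : Polynomial ℝ := ∑ pq ∈ (range (n + 1) ×ˢ range (n + 1)).filter
      (fun pq => pq.1 + 2 * pq.2 = n),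
      Polynomial.monomial pq.1 (b ^ pq.2 / ((pq.1.factorial : ℝ) * pq.2.factorial)) with hp
  have coeff_p : p.coeff n = 1 / n.factorial := by
    simp only [hp, Polynomial.finsetSum_coeff, Polynomial.coeff_monomial]
    rw [Finset.sum_eq_single (n, 0)]
    · simp
    · rintro ⟨i, j⟩ hij hne
      simp only [mem_filter, ne_eq, Prod.mk.injEq] at hij hne
      exact if_neg (by omega)
    · simp
  refine ⟨p, fun h0 => ?_, fun a => ?_⟩
  · rw [h0, Polynomial.coeff_zero] at coeff_p
    exact one_div_ne_zero (Nat.cast_ne_zero.2 n.factorial_ne_zero) coeff_p.symm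
  · simp only [hp, hermiteH, Polynomial.eval_finsetSum, Polynomial.eval_monomial]
    exact Finset.sum_congr rfl fun x _ => by ring

lemma finite_setOf_hermiteH_eq_zero (n : ℕ) (b : ℝ) : {a | hermiteH n a b = 0}.Finite := by
  obtain ⟨p, hp0, hp⟩ := exists_polynomial_eval_eq_hermiteH n b
  simpa only [Polynomial.IsRoot, hp] using Polynomial.finite_setOfPred_isRoot hp0

lemma hermiteH_eq_coeff (n : ℕ) (a b : ℝ) :
    hermiteH n a b = PowerSeries.coeff n
      (PowerSeries.rescale a (PowerSeries.exp ℝ) *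
        PowerSeries.expand 2 two_ne_zero (PowerSeries.rescale b (PowerSeries.exp ℝ))) := by
  set B := PowerSeries.expand 2 two_ne_zero (PowerSeries.rescale b (PowerSeries.exp ℝ))
  have two_dvd_of_ne_zero : ∀ x ∈ antidiagonal n,
      PowerSeries.coeff x.1 (PowerSeries.rescale a (PowerSeries.exp ℝ)) *
        PowerSeries.coeff x.2 B ≠ 0 → 2 ∣ x.2 := by
    intro x _ hne
    by_contra hx
    exact hne (by rw [PowerSeries.coeff_expand_of_not_dvd _ _ _ hx, mul_zero])
  rw [PowerSeries.coeff_mul, ← Finset.sum_filter_of_ne two_dvd_of_ne_zero, hermiteH]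
  refine Finset.sum_nbij' (fun pq => (pq.1, 2 * pq.2)) (fun x => (x.1, x.2 / 2)) ?_ ?_ ?_ ?_ ?_
  · grind [HasAntidiagonal.mem_antidiagonal]
  · grind [HasAntidiagonal.mem_antidiagonal]
  · grind
  · grind
  · intro pq _
    rw [PowerSeries.coeff_expand_mul, PowerSeries.coeff_rescale, PowerSeries.coeff_rescale,
      PowerSeries.coeff_exp, PowerSeries.coeff_exp]
    simp only [map_div₀, map_one, map_natCast]
    ring

lemma hermiteH_add (n : ℕ) (a b c d : ℝ) :
    hermiteH n (a + c) (b + d) =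
      ∑ x ∈ antidiagonal n, hermiteH x.1 a b * hermiteH x.2 c d := by
  simp_rw [hermiteH_eq_coeff]
  rw [← PowerSeries.coeff_mul, ← PowerSeries.exp_mul_exp_eq_exp_add,
    ← PowerSeries.exp_mul_exp_eq_exp_add, map_mul (PowerSeries.expand 2 two_ne_zero)]
  congr 1
  ring

end HermitePolynomials

lemma sum_antidiagonal_eq_add_sum_Icc_add {M : Type*} [AddCommMonoid M] (f : ℕ → ℕ → M)
    {n : ℕ} (hn : n ≠ 0) :
    ∑ x ∈ antidiagonal n, f x.1 x.2 = f 0 n + ∑ i ∈ Icc 1 (n - 1), f i (n - i) + f n 0 := by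
  have hIcc : Icc 1 (n - 1) = Ico 1 n := by
    ext i
    simp only [mem_Icc, mem_Ico]
    omega
  rw [Finset.Nat.sum_antidiagonal_eq_sum_range_succ f, Finset.sum_range_succ, range_eq_Ico,
    Finset.sum_eq_sum_Ico_succ_bot (Nat.pos_of_ne_zero hn), hIcc, Nat.sub_zero, Nat.sub_self]

section EvenFunctions

variable {Ω : Type*} [MeasurableSpace Ω] {P : Measure Ω} {D E : Ω → ℝ}

lemma eq_ite_abs_of_even {β : Type*} {f : ℝ → ℝ → β} (hf : ∀ x y, f (-x) (-y) = f x y)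
    (x y : ℝ) : f x y = if |x + y| = |x| + |y| then f |x| |y| else f |x| (-|y|) := by
  split_ifs with h <;> rw [abs_add_eq_add_abs_iff] at h
  · rcases h with ⟨hx, hy⟩ | ⟨hx, hy⟩
    · rw [abs_of_nonneg hx, abs_of_nonneg hy]
    · rw [abs_of_nonpos hx, abs_of_nonpos hy, hf]
  · rcases le_total 0 x with hx | hx
    · have hy : y ≤ 0 := by grind
      rw [abs_of_nonneg hx, abs_of_nonpos hy, neg_neg]
    · have hy : 0 ≤ y := by grind
      rw [abs_of_nonpos hx, abs_of_nonneg hy, hf]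

lemma aemeasurable_comp_of_even {β : Type*} [MeasurableSpace β] {f : ℝ → ℝ → β}
    (hD : AEMeasurable (fun ω => |D ω|) P) (hE : AEMeasurable (fun ω => |E ω|) P)
    (hDE : AEMeasurable (fun ω => |D ω + E ω|) P)
    (hf : Measurable (Function.uncurry f)) (hf_even : ∀ x y, f (-x) (-y) = f x y) :
    AEMeasurable (fun ω => f (D ω) (E ω)) P := by
  let G : ℝ × ℝ × ℝ → β := fun z =>
    if z.1 = z.2.1 + z.2.2 then f z.2.1 z.2.2 else f z.2.1 (-z.2.2)
  have hG : Measurable G :=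
    Measurable.ite (measurableSet_eq_fun (by fun_prop) (by fun_prop))
      (hf.comp (by fun_prop : Measurable fun z : ℝ × ℝ × ℝ => (z.2.1, z.2.2)))
      (hf.comp (by fun_prop : Measurable fun z : ℝ × ℝ × ℝ => (z.2.1, -z.2.2)))
  simp_rw [eq_ite_abs_of_even hf_even (D _)]
  exact hG.comp_aemeasurable (hDE.prodMk (hD.prodMk hE))

lemma aemeasurable_comp_of_mul_even {f g : ℝ → ℝ → ℝ}
    (hD : AEMeasurable (fun ω => |D ω|) P) (hE : AEMeasurable (fun ω => |E ω|) P)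
    (hDE : AEMeasurable (fun ω => |D ω + E ω|) P)
    (hf : Measurable (Function.uncurry f)) (hg : Measurable (Function.uncurry g))
    (hfg : ∀ x y, f (-x) (-y) * g (-x) (-y) = f x y * g x y)
    (hf_comp : AEMeasurable (fun ω => f (D ω) (E ω)) P)
    (hf_ne : ∀ᵐ ω ∂P, f (D ω) (E ω) ≠ 0) :
    AEMeasurable (fun ω => g (D ω) (E ω)) P := by
  have hmul : AEMeasurable (fun ω => f (D ω) (E ω) * g (D ω) (E ω)) P :=
    aemeasurable_comp_of_even (f := fun x y => f x y * g x y) hD hE hDE (hf.mul hg) hfg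
  refine (hmul.div hf_comp).congr ?_
  filter_upwards [hf_ne] with ω hω
  exact mul_div_cancel_left₀ _ hω

end EvenFunctions

section Symmetrization

lemma integrable_exp_mul_I (μ : Measure ℝ) [IsFiniteMeasure μ] (t : ℝ) :
    Integrable (fun x : ℝ => Complex.exp (t * x * Complex.I)) μ :=
  Integrable.of_bound (C := 1) (by fun_prop) <| .of_forall fun x => by
    exact_mod_cast (Complex.norm_exp_ofReal_mul_I (t * x)).le

lemma re_charFun (μ : Measure ℝ) [IsFiniteMeasure μ] (t : ℝ) :
    (charFun μ t).re = ∫ x, Real.cos (t * x) ∂μ := by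
  rw [charFun_apply_real]
  refine (integral_re (integrable_exp_mul_I μ t)).symm.trans (integral_congr_ae <| .of_forall ?_)
  intro x
  exact_mod_cast Complex.exp_ofReal_mul_I_re (t * x)

lemma charFun_add_map_neg (μ : Measure ℝ) [IsFiniteMeasure μ] (t : ℝ) :
    charFun (μ + μ.map Neg.neg) t = ((2 * (charFun μ t).re : ℝ) : ℂ) := by
  have charFun_map_neg : charFun (μ.map Neg.neg) t = charFun μ (-t) := by
    rw [charFun_apply_real, charFun_apply_real, integral_map (by fun_prop) (by fun_prop)]
    simp
  rw [charFun_apply_real, integral_add_measure (integrable_exp_mul_I _ t)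
    (integrable_exp_mul_I _ t), ← charFun_apply_real, ← charFun_apply_real, charFun_map_neg,
    charFun_neg, Complex.add_conj]

lemma add_map_neg_eq_of_integral_cos_eq {μ ν : Measure ℝ} [IsFiniteMeasure μ] [IsFiniteMeasure ν]
    (h : ∀ t, ∫ x, Real.cos (t * x) ∂μ = ∫ x, Real.cos (t * x) ∂ν) :
    μ + μ.map Neg.neg = ν + ν.map Neg.neg :=
  Measure.ext_of_charFun <| funext fun t => by simp only [charFun_add_map_neg, re_charFun, h]

lemma nullSingletonClass_of_integral_cos_eq {μ ν : Measure ℝ} [IsFiniteMeasure μ]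
    [IsFiniteMeasure ν] [NullSingletonClass ν]
    (h : ∀ t, ∫ x, Real.cos (t * x) ∂μ = ∫ x, Real.cos (t * x) ∂ν) :
    NullSingletonClass μ where
  measure_singleton c := by
    have hν : (ν + ν.map Neg.neg) {c} = 0 := by
      rw [Measure.add_apply, Measure.map_apply measurable_neg (measurableSet_singleton c)]
      simp
    rw [← add_map_neg_eq_of_integral_cos_eq h, Measure.add_apply, add_eq_zero] at hν
    exact hν.1

lemma integral_cos_gaussianReal (v : NNReal) (t : ℝ) :
    ∫ x, Real.cos (t * x) ∂(ProbabilityTheory.gaussianReal 0 v) = Real.exp (-(v * t ^ 2 / 2)) := by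
  have h : charFun (ProbabilityTheory.gaussianReal 0 v) t =
      (Real.exp (-(v * t ^ 2 / 2)) : ℝ) := by
    rw [ProbabilityTheory.charFun_gaussianReal]
    push_cast
    ring_nf
  rw [← re_charFun, h, Complex.ofReal_re]

lemma hasSum_integral_cos {Ω : Type*} [MeasurableSpace Ω] {P : Measure Ω} {Y : Ω → ℝ}
    (hY : ∀ k, Integrable (fun ω => Y ω ^ (2 * k)) P)
    (hsum : Summable fun k : ℕ => (∫ ω, Y ω ^ (2 * k) ∂P) / (2 * k).factorial) :
    HasSum (fun k : ℕ => (-1) ^ k * (∫ ω, Y ω ^ (2 * k) ∂P) / (2 * k).factorial)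
      (∫ ω, Real.cos (Y ω) ∂P) := by
  have hnorm (k : ℕ) (ω : Ω) : ‖(-1) ^ k * Y ω ^ (2 * k) / ((2 * k).factorial : ℝ)‖ =
      Y ω ^ (2 * k) / (2 * k).factorial := by
    simp [(even_two_mul k).pow_abs]
  have hterm (k : ℕ) : Integrable
      (fun ω => (-1) ^ k * Y ω ^ (2 * k) / ((2 * k).factorial : ℝ)) P :=
    ((hY k).const_mul _).div_const _
  have h := hasSum_integral_of_summable_integral_norm hterm
    (by simpa only [hnorm, integral_div] using hsum)
  simpa only [(Real.hasSum_cos _).tsum_eq, integral_div, integral_const_mul] using h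

end Symmetrization

section HermiteMoments

variable {Ω : Type*} [MeasurableSpace Ω] {P : Measure Ω} {D E : Ω → ℝ} {b d : ℝ}

lemma memLp_two_hermiteH {f : Ω → ℝ} (hf : ∀ k : ℕ, Integrable (fun ω => f ω ^ k) P)
    (n : ℕ) (c : ℝ) : MemLp (fun ω => hermiteH n (f ω) c) 2 P := by
  have hpow (p : ℕ) : MemLp (fun ω => f ω ^ p) 2 P := by
    rw [memLp_two_iff_integrable_sq (hf p).aestronglyMeasurable]
    simpa only [← pow_mul] using hf (p * 2)
  unfold hermiteH
  refine memLp_finsetSum _ fun x _ => ?_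
  simpa only [mul_div_assoc] using (hpow x.1).mul_const _

lemma integrable_hermiteH_mul_hermiteH (hD : ∀ k : ℕ, Integrable (fun ω => |D ω| ^ k) P)
    (hE : ∀ k : ℕ, Integrable (fun ω => |E ω| ^ k) P) {i j : ℕ}
    (hmeas : AEMeasurable (fun ω => hermiteH i (D ω) b * hermiteH j (E ω) d) P) :
    Integrable (fun ω => hermiteH i (D ω) b * hermiteH j (E ω) d) P := by
  refine ((memLp_two_hermiteH hD i |b|).integrable_mul (memLp_two_hermiteH hE j |d|)).mono'
    hmeas.aestronglyMeasurable (.of_forall fun ω => ?_)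
  rw [Real.norm_eq_abs, abs_mul]
  exact mul_le_mul (abs_hermiteH_le i _ _) (abs_hermiteH_le j _ _) (abs_nonneg _)
    ((abs_nonneg _).trans (abs_hermiteH_le i _ _))

lemma integral_hermiteH_add (hD : ∀ k : ℕ, Integrable (fun ω => |D ω| ^ k) P)
    (hE : ∀ k : ℕ, Integrable (fun ω => |E ω| ^ k) P) {n : ℕ}
    (hmeas : ∀ x ∈ antidiagonal n,
      AEMeasurable (fun ω => hermiteH x.1 (D ω) b * hermiteH x.2 (E ω) d) P) :
    ∫ ω, hermiteH n (D ω + E ω) (b + d) ∂P =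
      ∑ x ∈ antidiagonal n, ∫ ω, hermiteH x.1 (D ω) b * hermiteH x.2 (E ω) d ∂P := by
  simp_rw [hermiteH_add]
  exact integral_finsetSum _ fun x hx => integrable_hermiteH_mul_hermiteH hD hE (hmeas x hx)

lemma measurable_hermiteH_mul_hermiteH (i j : ℕ) (b d : ℝ) :
    Measurable (Function.uncurry fun x y => hermiteH i x b * hermiteH j y d) :=
  (((continuous_hermiteH i b).comp continuous_fst).mul
    ((continuous_hermiteH j d).comp continuous_snd)).measurable

lemma hermiteH_mul_hermiteH_neg (i j : ℕ) (b d x y : ℝ) :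
    hermiteH i (-x) b * hermiteH j (-y) d =
      (-1) ^ (i + j) * (hermiteH i x b * hermiteH j y d) := by
  rw [hermiteH_neg_left, hermiteH_neg_left]
  ring

/-- `D` behaves, as far as its Hermite moments can tell, like a centered Gaussian variable of
variance `-2 * b`. No measurability is imposed on `D` itself: only `|D|` has moments, and a
Hermite moment of odd order may vanish merely because its integrand is not integrable. -/
structure IsHermiteCentered (D : Ω → ℝ) (b : ℝ) (P : Measure Ω) : Prop where
  integrable_abs_pow : ∀ k : ℕ, Integrable (fun ω => |D ω| ^ k) P
  integral_hermiteH : ∀ n : ℕ, 1 ≤ n → ∫ ω, hermiteH n (D ω) b ∂P = 0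

namespace IsHermiteCentered

lemma aemeasurable_abs (hD : IsHermiteCentered D b P) : AEMeasurable (fun ω => |D ω|) P := by
  simpa only [pow_one] using (hD.integrable_abs_pow 1).aemeasurable

lemma integrable_pow_two_mul (hD : IsHermiteCentered D b P) (k : ℕ) :
    Integrable (fun ω => D ω ^ (2 * k)) P := by
  simpa only [(even_two_mul k).pow_abs] using hD.integrable_abs_pow (2 * k)

variable [IsProbabilityMeasure P]

-- Chen's identity for `D = D + 0` and `0 = b + (-b)` expresses `D ^ (2 * k)` through Hermite
-- polynomials of even order.
lemma integral_pow_two_mul (hD : IsHermiteCentered D b P) (k : ℕ) :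
    (∫ ω, D ω ^ (2 * k) ∂P) / (2 * k).factorial = (-b) ^ k / k.factorial := by
  have hmeas : ∀ x ∈ antidiagonal (2 * k),
      AEMeasurable (fun ω => hermiteH x.1 (D ω) b * hermiteH x.2 0 (-b)) P := fun x hx =>
    aemeasurable_comp_of_even (E := fun _ => 0) hD.aemeasurable_abs (by fun_prop)
      (by simpa using hD.aemeasurable_abs) (measurable_hermiteH_mul_hermiteH x.1 x.2 b (-b))
      fun y z => by
        rw [hermiteH_mul_hermiteH_neg, HasAntidiagonal.mem_antidiagonal.1 hx,
          (even_two_mul k).neg_one_pow, one_mul]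
  have hzero : ∀ k : ℕ, Integrable (fun _ : Ω => |(0 : ℝ)| ^ k) P := fun k => integrable_const _
  have h := integral_hermiteH_add hD.integrable_abs_pow hzero hmeas
  simp only [add_zero, add_neg_cancel, hermiteH_zero_right, integral_div, integral_mul_const] at h
  rw [h, Finset.sum_eq_single (0, 2 * k)]
  · simp [hermiteH_zero, hermiteH_two_mul_zero_left]
  · rintro ⟨i, j⟩ hij hne
    have hi : 1 ≤ i := by grind [HasAntidiagonal.mem_antidiagonal]
    rw [hD.integral_hermiteH i hi, zero_mul]
  · simp

lemma integral_sq (hD : IsHermiteCentered D b P) : ∫ ω, D ω ^ 2 ∂P = -(2 * b) := by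
  have h := hD.integral_pow_two_mul 1
  norm_num at h
  linarith

lemma nonpos (hD : IsHermiteCentered D b P) : b ≤ 0 := by
  have h : 0 ≤ ∫ ω, D ω ^ 2 ∂P := integral_nonneg fun ω => sq_nonneg _
  rw [hD.integral_sq] at h
  linarith

lemma ae_eq_zero (hD : IsHermiteCentered D 0 P) : ∀ᵐ ω ∂P, D ω = 0 := by
  have h : ∫ ω, D ω ^ 2 ∂P = 0 := by simpa using hD.integral_sq
  rw [integral_eq_zero_iff_of_nonneg (fun ω => sq_nonneg _) (hD.integrable_pow_two_mul 1)] at h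
  filter_upwards [h] with ω hω using pow_eq_zero_iff two_ne_zero |>.1 hω

lemma integral_cos (hD : IsHermiteCentered D b P) (t : ℝ) :
    ∫ ω, Real.cos (t * D ω) ∂P = Real.exp (b * t ^ 2) := by
  have hpow (k : ℕ) : (∫ ω, (t * D ω) ^ (2 * k) ∂P) / (2 * k).factorial =
      (-b * t ^ 2) ^ k / k.factorial := by
    simp_rw [mul_pow t]
    rw [integral_const_mul, mul_div_assoc, hD.integral_pow_two_mul, mul_pow, pow_mul]
    ring
  have hint (k : ℕ) : Integrable (fun ω => (t * D ω) ^ (2 * k)) P := by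
    simpa only [mul_pow] using (hD.integrable_pow_two_mul k).const_mul _
  have hcos := hasSum_integral_cos hint
    (by simpa only [hpow] using Real.summable_pow_div_factorial _)
  have hexp := NormedSpace.expSeries_div_hasSum_exp (b * t ^ 2)
  rw [← Real.exp_eq_exp_ℝ] at hexp
  refine hcos.unique (hexp.congr_fun fun k => ?_)
  rw [mul_div_assoc, hpow, ← mul_div_assoc, ← mul_pow]
  ring

lemma ae_abs_ne (hD : IsHermiteCentered D b P) (hb : b ≠ 0) (c : ℝ) : ∀ᵐ ω ∂P, |D ω| ≠ c := by
  obtain ⟨v, hv⟩ : ∃ v : NNReal, (v : ℝ) = -(2 * b) := ⟨⟨_, by linarith [hD.nonpos]⟩, rfl⟩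
  have hv0 : v ≠ 0 := by
    rintro rfl
    exact hb (by simpa using hv)
  have := ProbabilityTheory.nullSingletonClass_gaussianReal (μ := 0) hv0
  have := Measure.isProbabilityMeasure_map hD.aemeasurable_abs
  have cos_mul_abs (t x : ℝ) : Real.cos (t * |x|) = Real.cos (t * x) := by
    rcases abs_choice x with h | h <;> simp [h]
  have : NullSingletonClass (P.map fun ω => |D ω|) := by
    refine nullSingletonClass_of_integral_cos_eq (ν := ProbabilityTheory.gaussianReal 0 v)
      fun t => ?_
    rw [integral_map hD.aemeasurable_abs (by fun_prop), integral_cos_gaussianReal]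
    simp_rw [cos_mul_abs]
    rw [hD.integral_cos, hv]
    ring_nf
  exact ae_of_ae_map hD.aemeasurable_abs (Measure.ae_ne _ c)

lemma ae_hermiteH_ne_zero (hD : IsHermiteCentered D b P) (hb : b ≠ 0) (n : ℕ) :
    ∀ᵐ ω ∂P, hermiteH n (D ω) b ≠ 0 := by
  have h := (ae_ball_iff (finite_setOf_hermiteH_eq_zero n b).countable).2
    fun a _ => hD.ae_abs_ne hb |a|
  filter_upwards [h] with ω hω h0
  exact hω (D ω) h0 rfl

lemma ae_hermiteH_eq_zero_or_ae_ne_zero (hD : IsHermiteCentered D b P) :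
    (∀ n, n ≠ 0 → ∀ᵐ ω ∂P, hermiteH n (D ω) b = 0) ∨
      ∀ n, ∀ᵐ ω ∂P, hermiteH n (D ω) b ≠ 0 := by
  rcases eq_or_ne b 0 with rfl | hb
  · left
    intro n hn
    filter_upwards [hD.ae_eq_zero] with ω hω
    rw [hω, hermiteH_zero_right, zero_pow hn, zero_div]
  · exact Or.inr (hD.ae_hermiteH_ne_zero hb)

end IsHermiteCentered

lemma sum_integral_hermiteH_mul_hermiteH_eq_zero (hD : IsHermiteCentered D b P)
    (hE : IsHermiteCentered E d P)
    (hDE : IsHermiteCentered (fun ω => D ω + E ω) (b + d) P) {n : ℕ} (hn : n ≠ 0)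
    (hmeas : ∀ x ∈ antidiagonal n,
      AEMeasurable (fun ω => hermiteH x.1 (D ω) b * hermiteH x.2 (E ω) d) P) :
    ∑ i ∈ Icc 1 (n - 1), ∫ ω, hermiteH i (D ω) b * hermiteH (n - i) (E ω) d ∂P = 0 := by
  have hn1 : 1 ≤ n := Nat.one_le_iff_ne_zero.2 hn
  have h := integral_hermiteH_add hD.integrable_abs_pow hE.integrable_abs_pow hmeas
  rw [hDE.integral_hermiteH n hn1, sum_antidiagonal_eq_add_sum_Icc_add
    (fun i j => ∫ ω, hermiteH i (D ω) b * hermiteH j (E ω) d ∂P) hn] at h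
  simpa only [hermiteH_zero, one_mul, mul_one, hD.integral_hermiteH n hn1,
    hE.integral_hermiteH n hn1, zero_add, add_zero] using h.symm

lemma aemeasurable_hermiteH_mul_hermiteH_of_add_eq (hD : AEMeasurable (fun ω => |D ω|) P)
    (hE : AEMeasurable (fun ω => |E ω|) P) (hDE : AEMeasurable (fun ω => |D ω + E ω|) P)
    {i j k l : ℕ} (hijkl : i + j = k + l)
    (hmeas : AEMeasurable (fun ω => hermiteH i (D ω) b * hermiteH j (E ω) d) P)
    (hne : ∀ᵐ ω ∂P, hermiteH i (D ω) b * hermiteH j (E ω) d ≠ 0) :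
    AEMeasurable (fun ω => hermiteH k (D ω) b * hermiteH l (E ω) d) P := by
  refine aemeasurable_comp_of_mul_even (f := fun x y => hermiteH i x b * hermiteH j y d)
    (g := fun x y => hermiteH k x b * hermiteH l y d) hD hE hDE
    (measurable_hermiteH_mul_hermiteH i j b d) (measurable_hermiteH_mul_hermiteH k l b d)
    (fun x y => ?_) hmeas hne
  rw [hermiteH_mul_hermiteH_neg, hermiteH_mul_hermiteH_neg, hijkl, mul_mul_mul_comm, ← pow_add,
    (Even.add_self (k + l)).neg_one_pow, one_mul]

end HermiteMoments

theorem chen_hermite_balancing_general {Ω : Type*} [MeasurableSpace Ω] {P : Measure Ω}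
    [IsProbabilityMeasure P] {D E : Ω → ℝ} {b d : ℝ} (hD : IsHermiteCentered D b P)
    (hE : IsHermiteCentered E d P)
    (hDE : IsHermiteCentered (fun ω => D ω + E ω) (b + d) P) (n : ℕ) :
    ∑ i ∈ Icc 1 (n - 1), ∫ ω, hermiteH i (D ω) b * hermiteH (n - i) (E ω) d ∂P = 0 := by
  rcases hD.ae_hermiteH_eq_zero_or_ae_ne_zero with hD0 | hD0
  · refine Finset.sum_eq_zero fun i hi => integral_eq_zero_of_ae ?_
    filter_upwards [hD0 i (by grind)] with ω hω
    simp [hω]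
  rcases hE.ae_hermiteH_eq_zero_or_ae_ne_zero with hE0 | hE0
  · refine Finset.sum_eq_zero fun i hi => integral_eq_zero_of_ae ?_
    filter_upwards [hE0 (n - i) (by grind)] with ω hω
    simp [hω]
  by_cases hmeas : ∃ i ∈ Icc 1 (n - 1),
      AEMeasurable (fun ω => hermiteH i (D ω) b * hermiteH (n - i) (E ω) d) P
  · obtain ⟨i, hi, hi_meas⟩ := hmeas
    have hne : ∀ᵐ ω ∂P, hermiteH i (D ω) b * hermiteH (n - i) (E ω) d ≠ 0 := by
      filter_upwards [hD0 i, hE0 (n - i)] with ω using mul_ne_zero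
    exact sum_integral_hermiteH_mul_hermiteH_eq_zero hD hE hDE (by grind) fun x hx =>
      aemeasurable_hermiteH_mul_hermiteH_of_add_eq hD.aemeasurable_abs hE.aemeasurable_abs
        hDE.aemeasurable_abs (by grind [HasAntidiagonal.mem_antidiagonal]) hi_meas hne
  · push Not at hmeas
    exact Finset.sum_eq_zero fun i hi => integral_undef fun h => hmeas i hi h.aemeasurable

/-- Chen–Hermite balancing identities.  If the increments of `X`
have uniformly bounded moments and all Hermite moments
`𝔼[H_n(X_t − X_s, g(t) − g(s))]` vanish for `n ≥ 1`, then for all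
`0 ≤ s ≤ u ≤ t ≤ T` and `n ≥ 2`,
`∑_{i=1}^{n−1} 𝔼[H_i(X_u − X_s, g(u) − g(s)) · H_{n−i}(X_t − X_u, g(t) − g(u))] = 0`. -/
theorem chen_hermite_balancing
    {Ω : Type*} [MeasurableSpace Ω] (P : Measure Ω) [IsProbabilityMeasure P]
    (T : ℝ) (hT : 0 < T)
    (X : ℝ → Ω → ℝ) (g : ℝ → ℝ)
    (C : ℝ) (hC : 0 < C)
    (hmom : ∀ n : ℕ, ∀ s t : ℝ, 0 ≤ s → s ≤ t → t ≤ T →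
      Integrable (fun ω => |X t ω - X s ω| ^ n) P ∧
      (∫ ω, |X t ω - X s ω| ^ n ∂P) ≤ 2 * (Nat.factorial n : ℝ) * C ^ n)
    (hherm : ∀ n : ℕ, 1 ≤ n → ∀ s t : ℝ, 0 ≤ s → s ≤ t → t ≤ T →
      (∫ ω, hermiteH n (X t ω - X s ω) (g t - g s) ∂P) = 0) :
    ∀ s u t : ℝ, 0 ≤ s → s ≤ u → u ≤ t → t ≤ T → ∀ n : ℕ, 2 ≤ n →
      ∑ i ∈ Finset.Icc 1 (n - 1),
        (∫ ω, hermiteH i (X u ω - X s ω) (g u - g s)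
            * hermiteH (n - i) (X t ω - X u ω) (g t - g u) ∂P) = 0 := by
  intro s u t hs hsu hut htT n _
  have centered : ∀ s t : ℝ, 0 ≤ s → s ≤ t → t ≤ T →
      IsHermiteCentered (fun ω => X t ω - X s ω) (g t - g s) P := fun s t hs hst htT =>
    ⟨fun k => (hmom k s t hs hst htT).1, fun n hn => hherm n hn s t hs hst htT⟩
  refine chen_hermite_balancing_general (centered s u hs hsu (hut.trans htT))
    (centered u t (hs.trans hsu) hut htT) ?_ n
  simpa only [sub_add_sub_cancel'] using centered s t hs (hsu.trans hut) htT
end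

section
/- Abstract Kreps–Yan theorem, existence direction (the 'only if' part of Theorem 6.1 via the exhaustion argument): Let C ⊆ L^p be a norm-closed convex cone with 0 ∈ C, such that −h ∈ C for every h ∈ L^p_+, and such that C ∩ L^p_+ = {0}. Then there exists g ∈ L^q with g > 0 ℙ-a.e., 𝔼[g] = 1, and ⟨h, g⟩ ≤ 0 for every h ∈ C. Equivalently, the measure ℚ defined by dℚ/dℙ = g is a probability measure equivalent to ℙ, with dℚ/dℙ ∈ L^q and 𝔼_ℚ[h] ≤ 0 for all h ∈ C. -/
open MeasureTheory

open Filter Topology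
open scoped ENNReal

/-!
The polar cone `C° = {g ∈ L^q | ⟨h, g⟩ ≤ 0 for all h ∈ C}` consists of nonnegative functions because
`C` contains `-L^p_+`. If `A` has positive measure, then `1_A ∉ C`, so Hahn–Banach and the Riesz
representation of `(L^p)*` yield a `g ∈ C°` with `∫_A g > 0`. Summing a suitably scaled maximizing
sequence gives a `k ∈ C°` for which `{k > 0}` has maximal measure. Such a `k` is positive almost
everywhere, since otherwise some `g ∈ C°` with `∫_{k = 0} g > 0` would make `{k + g > 0}` larger.

For the Riesz representation, let `g` be the Radon–Nikodym derivative of `s ↦ φ 1_s`. A bounded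
truncation `1_A g` represents `f ↦ φ (1_A f)`, so its `L^q` norm is at most `‖φ‖`; by Fatou's lemma
`g` itself is in `L^q`.
-/

section Indicator

variable {Ω ι E : Type*} [MeasurableSpace Ω] {μ : Measure Ω} {p : ℝ≥0∞} [NormedAddCommGroup E]

lemma tendsto_measure_biUnion_symmDiff_iUnion [Countable ι] {s : ι → Set Ω}
    (hs : ∀ i, MeasurableSet (s i)) (hd : Pairwise (Function.onFun Disjoint s))
    (hμ : μ (⋃ i, s i) ≠ ∞) :
    Tendsto (fun F : Finset ι ↦ μ (symmDiff (⋃ i ∈ F, s i) (⋃ i, s i))) atTop (𝓝 0) := by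
  have htail : Tendsto (fun F : Finset ι ↦ ∑' i : {i // i ∉ F}, μ (s i)) atTop (𝓝 0) :=
    ENNReal.tendsto_tsum_compl_atTop_zero (by rwa [← measure_iUnion hd hs])
  refine tendsto_of_tendsto_of_tendsto_of_le_of_le tendsto_const_nhds htail (fun _ ↦ zero_le)
    fun F ↦ (measure_mono ?_).trans (measure_iUnion_le _)
  rw [symmDiff_of_le (Set.iUnion₂_subset fun i _ ↦ Set.subset_iUnion s i)]
  rintro ω ⟨hω, hωF⟩
  obtain ⟨i, hi⟩ := Set.mem_iUnion.1 hω
  exact Set.mem_iUnion.2 ⟨⟨i, fun hiF ↦ hωF (Set.mem_biUnion hiF hi)⟩, hi⟩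

lemma indicatorConstLp_biUnion_finset {s : ι → Set Ω} (hs : ∀ i, MeasurableSet (s i))
    (hμs : ∀ i, μ (s i) ≠ ∞) (hd : Pairwise (Function.onFun Disjoint s)) (c : E) (F : Finset ι) :
    indicatorConstLp p (F.measurableSet_biUnion fun i _ ↦ hs i)
        (measure_biUnion_lt_top F.finite_toSet fun i _ ↦ (hμs i).lt_top).ne c =
      ∑ i ∈ F, indicatorConstLp p (hs i) (hμs i) c := by
  classical
  induction F using Finset.induction_on with
  | empty => simp
  | insert i F hi ih =>
    rw [Finset.sum_insert hi, ← ih, ← indicatorConstLp_disjoint_union]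
    · simp only [Finset.set_biUnion_insert]
    · exact Set.disjoint_iUnion₂_right.2 fun j hj ↦ hd (ne_of_mem_of_not_mem hj hi).symm

lemma hasSum_indicatorConstLp [Countable ι] [Fact (1 ≤ p)] (hp : p ≠ ∞)
    {s : ι → Set Ω} (hs : ∀ i, MeasurableSet (s i)) (hd : Pairwise (Function.onFun Disjoint s))
    (hμ : μ (⋃ i, s i) ≠ ∞) (c : E) :
    HasSum (fun i ↦ indicatorConstLp p (hs i)
        (measure_ne_top_of_subset (Set.subset_iUnion s i) hμ) c)
      (indicatorConstLp p (.iUnion hs) hμ c) := by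
  simp only [HasSum, SummationFilter.unconditional_filter,
    ← indicatorConstLp_biUnion_finset hs _ hd c]
  exact tendsto_indicatorConstLp_set hp (tendsto_measure_biUnion_symmDiff_iUnion hs hd hμ)

lemma smul_indicatorConstLp [NormedSpace ℝ E] {s : Set Ω} (hs : MeasurableSet s) (hμs : μ s ≠ ∞)
    (a : ℝ) (c : E) :
    a • indicatorConstLp p hs hμs c = indicatorConstLp p hs hμs (a • c) := by
  simp_rw [indicatorConstLp, ← MemLp.toLp_const_smul, Set.indicator_const_smul]
  rfl

lemma indicatorConstLp_nonneg {s : Set Ω} (hs : MeasurableSet s) (hμs : μ s ≠ ∞) {c : ℝ}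
    (hc : 0 ≤ c) : 0 ≤ indicatorConstLp p hs hμs c := by
  rw [← Lp.coeFn_nonneg]
  filter_upwards [indicatorConstLp_coeFn (p := p) (hs := hs) (hμs := hμs) (c := c)] with ω hω
  exact hω ▸ Set.indicator_nonneg (fun _ _ ↦ hc) ω

lemma indicatorConstLp_eq_zero_iff {s : Set Ω} (hs : MeasurableSet s) (hμs : μ s ≠ ∞) {c : E}
    (hc : c ≠ 0) : indicatorConstLp p hs hμs c = 0 ↔ μ s = 0 := by
  rw [Lp.eq_zero_iff_ae_eq_zero, (indicatorConstLp_coeFn (p := p) (hs := hs) (hμs := hμs)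
    (c := c)).congr_left, Set.indicator_ae_eq_zero, Function.support_const hc, Set.inter_univ]

lemma clm_ext_indicatorConstLp [Fact (1 ≤ p)] [NormedSpace ℝ E] (hp : p ≠ ∞)
    {φ ψ : Lp ℝ p μ →L[ℝ] E}
    (h : ∀ s (hs : MeasurableSet s) (hμs : μ s ≠ ∞), φ (indicatorConstLp p hs hμs 1) =
      ψ (indicatorConstLp p hs hμs 1)) : φ = ψ := by
  ext f
  induction f using Lp.induction (hp_ne_top := hp) with
  | indicatorConst c hs hμs =>
    rw [Lp.simpleFunc.coe_indicatorConst, ← mul_one c, ← smul_eq_mul, ← smul_indicatorConstLp,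
      map_smul, map_smul, h]
  | add _ _ _ hf hg => rw [map_add, map_add, hf, hg]
  | isClosed => exact isClosed_eq φ.continuous ψ.continuous

lemma integral_indicatorConstLp_one_mul {s : Set Ω} (hs : MeasurableSet s) (hμs : μ s ≠ ∞)
    (g : Ω → ℝ) : ∫ ω, indicatorConstLp p hs hμs (1 : ℝ) ω * g ω ∂μ = ∫ ω in s, g ω ∂μ := by
  rw [← integral_indicator hs]
  refine integral_congr_ae ?_
  filter_upwards [indicatorConstLp_coeFn (p := p) (hs := hs) (hμs := hμs) (c := (1 : ℝ))] with ω hω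
  rw [hω, ← Set.indicator_mul_left]
  simp only [one_mul]

lemma eLpNorm_le_of_forall_nat_eLpNorm_indicator_le {g : Ω → E}
    (hg : StronglyMeasurable g) {M : ℝ≥0∞}
    (hM : ∀ n : ℕ, eLpNorm ({ω | ‖g ω‖ ≤ n}.indicator g) p μ ≤ M) : eLpNorm g p μ ≤ M := by
  have hlim (ω : Ω) : Tendsto (fun n : ℕ ↦ {ω | ‖g ω‖ ≤ n}.indicator g ω) atTop (𝓝 (g ω)) := by
    obtain ⟨N, hN⟩ := exists_nat_ge ‖g ω‖
    refine tendsto_const_nhds.congr' ((eventually_ge_atTop N).mono fun n hn ↦ ?_)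
    have hω : ω ∈ {ω | ‖g ω‖ ≤ n} := hN.trans (Nat.cast_le.2 hn)
    exact (Set.indicator_of_mem hω g).symm
  refine (Lp.eLpNorm_lim_le_liminf_eLpNorm (fun n ↦ ?_) g (.of_forall hlim)).trans ?_
  · exact (hg.indicator (hg.norm.measurable measurableSet_Iic)).aestronglyMeasurable
  · exact liminf_le_of_frequently_le' (.of_forall hM)

/-- The contraction `f ↦ 1_A f` of `L^p`, encoded as the Hölder product with `1_A ∈ L^∞`. -/
noncomputable def indicatorMulLp [Fact (1 ≤ p)] {A : Set Ω} (hA : MeasurableSet A)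
    (hμA : μ A ≠ ∞) : Lp ℝ p μ →L[ℝ] Lp ℝ p μ :=
  (ContinuousLinearMap.mul ℝ ℝ).holderL μ ∞ p p (indicatorConstLp ∞ hA hμA 1)

lemma indicatorMulLp_indicatorConstLp_one [Fact (1 ≤ p)] {A s : Set Ω} (hA : MeasurableSet A)
    (hμA : μ A ≠ ∞) (hs : MeasurableSet s) (hμs : μ s ≠ ∞) :
    indicatorMulLp hA hμA (indicatorConstLp p hs hμs 1) =
      indicatorConstLp p (hs.inter hA) (measure_ne_top_of_subset Set.inter_subset_left hμs) 1 := by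
  refine Lp.ext ?_
  filter_upwards [(ContinuousLinearMap.mul ℝ ℝ).coeFn_holder (r := p)
    (indicatorConstLp ∞ hA hμA 1) (indicatorConstLp p hs hμs 1),
    indicatorConstLp_coeFn (p := ∞) (hs := hA) (hμs := hμA) (c := (1 : ℝ)),
    indicatorConstLp_coeFn (p := p) (hs := hs) (hμs := hμs) (c := (1 : ℝ)),
    indicatorConstLp_coeFn (p := p) (hs := hs.inter hA)
      (hμs := measure_ne_top_of_subset Set.inter_subset_left hμs) (c := (1 : ℝ))]
    with ω hmul h₁ h₂ h₃
  refine hmul.trans ?_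
  rw [h₁, h₂, h₃]
  simp [← Set.inter_indicator_mul, Set.inter_comm]

lemma norm_indicatorMulLp_le [Fact (1 ≤ p)] {A : Set Ω} (hA : MeasurableSet A) (hμA : μ A ≠ ∞) :
    ‖(indicatorMulLp hA hμA : Lp ℝ p μ →L[ℝ] Lp ℝ p μ)‖ ≤ 1 := by
  have hnorm : ‖indicatorConstLp (μ := μ) ∞ hA hμA (1 : ℝ)‖ ≤ 1 := by
    simpa using norm_indicatorConstLp_le (p := ∞) (hs := hA) (hμs := hμA) (c := (1 : ℝ))
  have hmul : ‖(ContinuousLinearMap.mul ℝ ℝ).holderL μ ∞ p p‖ ≤ 1 :=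
    ((ContinuousLinearMap.mul ℝ ℝ).norm_holderL_le).trans (by simp)
  exact (ContinuousLinearMap.le_of_opNorm_le_of_le _ hmul hnorm).trans_eq (one_mul 1)

end Indicator

section NormPower

variable {Ω E : Type*} [MeasurableSpace Ω] {μ : Measure Ω} [NormedAddCommGroup E]

lemma eLpNorm_norm_rpow_sub_two_smul [NormedSpace ℝ E] {r s : ℝ} (hrs : r.HolderConjugate s)
    (g : Ω → E) :
    eLpNorm (fun ω ↦ ‖g ω‖ ^ (s - 2) • g ω) (.ofReal r) μ =
      eLpNorm g (.ofReal s) μ ^ (s - 1) := by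
  have hs : 1 < s := hrs.symm.lt
  have hnorm (x : E) : ‖‖x‖ ^ (s - 2) • x‖ = ‖‖x‖ ^ (s - 1)‖ := by
    rw [norm_smul, Real.norm_rpow_of_nonneg (norm_nonneg x),
      Real.norm_rpow_of_nonneg (norm_nonneg x), norm_norm,
      ← Real.rpow_add_one' (norm_nonneg x) (by linarith)]
    ring_nf
  rw [eLpNorm_congr_norm_ae (.of_forall fun ω ↦ hnorm (g ω)),
    eLpNorm_norm_rpow g (sub_pos.2 hs), ← ENNReal.ofReal_mul hrs.nonneg, mul_comm r,
    hrs.symm.sub_one_mul_conj]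

lemma norm_rpow_toReal_eq_integral {q : ℝ≥0∞} [Fact (1 ≤ q)] (hq : q ≠ ∞)
    (g : Lp E q μ) :
    ‖g‖ ^ q.toReal = ∫ ω, ‖g ω‖ ^ q.toReal ∂μ := by
  have hq0 : q ≠ 0 := (zero_lt_one.trans_le Fact.out).ne'
  rw [Lp.norm_def, toReal_eLpNorm (Lp.aestronglyMeasurable g),
    lpNorm_eq_integral_norm_rpow_toReal hq0 hq (Lp.aestronglyMeasurable g),
    Real.rpow_inv_rpow (by positivity) (ENNReal.toReal_ne_zero.2 ⟨hq0, hq⟩)]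

end NormPower

section Pairing

variable {Ω : Type*} [MeasurableSpace Ω] {μ : Measure Ω} {p q : ℝ≥0∞}
  [Fact (1 ≤ p)] [Fact (1 ≤ q)] [p.HolderConjugate q]

variable (μ p q) in
/-- The duality pairing `⟨f, g⟩ = ∫ f g` of `L^p` and `L^q`, as a bilinear map. -/
noncomputable def lpMulPairing : Lp ℝ p μ →L[ℝ] Lp ℝ q μ →L[ℝ] ℝ :=
  (ContinuousLinearMap.mul ℝ ℝ).lpPairing μ p q

lemma lpMulPairing_apply (f : Lp ℝ p μ) (g : Lp ℝ q μ) :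
    lpMulPairing μ p q f g = ∫ ω, f ω * g ω ∂μ :=
  (ContinuousLinearMap.mul ℝ ℝ).lpPairing_eq_integral f g

lemma lpMulPairing_indicatorConstLp_one {s : Set Ω} (hs : MeasurableSet s) (hμs : μ s ≠ ∞)
    (g : Lp ℝ q μ) : lpMulPairing μ p q (indicatorConstLp p hs hμs 1) g = ∫ ω in s, g ω ∂μ := by
  rw [lpMulPairing_apply, integral_indicatorConstLp_one_mul]

lemma exists_norm_eq_lpMulPairing_eq (hp : p ≠ ∞) (hq : q ≠ ∞) (g : Lp ℝ q μ) :
    ∃ f : Lp ℝ p μ, ‖f‖ = ‖g‖ ^ (q.toReal - 1) ∧ lpMulPairing μ p q f g = ‖g‖ ^ q.toReal := by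
  have hpq : p.toReal.HolderConjugate q.toReal :=
    ENNReal.HolderConjugate.toReal_of_ne_top hp hq
  have hnorm := eLpNorm_norm_rpow_sub_two_smul (μ := μ) hpq g
  rw [ENNReal.ofReal_toReal hp, ENNReal.ofReal_toReal hq] at hnorm
  have hmeas : AEMeasurable g μ := (Lp.aestronglyMeasurable g).aemeasurable
  -- `|g| ^ (q - 2) g` is the equality case of Hölder's inequality against `g`
  have hmem : MemLp (fun ω ↦ ‖g ω‖ ^ (q.toReal - 2) • g ω) p μ := by
    refine ⟨AEMeasurable.aestronglyMeasurable (by fun_prop), hnorm ▸ ?_⟩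
    exact ENNReal.rpow_lt_top_of_nonneg hpq.symm.sub_one_pos.le (Lp.eLpNorm_ne_top g)
  refine ⟨hmem.toLp _, ?_, ?_⟩
  · rw [Lp.norm_toLp, hnorm, ← ENNReal.toReal_rpow, ← Lp.norm_def]
  · rw [lpMulPairing_apply, norm_rpow_toReal_eq_integral hq]
    refine integral_congr_ae (hmem.coeFn_toLp.mono fun ω hω ↦ ?_)
    have hq0 : (q.toReal - 2) + 2 ≠ 0 := by simpa using hpq.symm.ne_zero
    calc hmem.toLp _ ω * g ω = ‖g ω‖ ^ (q.toReal - 2) * ‖g ω‖ ^ 2 := by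
          rw [hω]
          simp only [Real.norm_eq_abs, sq_abs, smul_eq_mul]
          ring
      _ = ‖g ω‖ ^ q.toReal := by
          rw [← Real.rpow_two, ← Real.rpow_add' (norm_nonneg _) hq0, sub_add_cancel]

lemma norm_le_norm_flip_lpMulPairing_of_ne_top (hp : p ≠ ∞) (hq : q ≠ ∞) (g : Lp ℝ q μ) :
    ‖g‖ ≤ ‖(lpMulPairing μ p q).flip g‖ := by
  obtain ⟨f, hf, hfg⟩ := exists_norm_eq_lpMulPairing_eq hp hq g
  rcases eq_or_ne g 0 with rfl | hg
  · simp
  have hg' : 0 < ‖g‖ := norm_pos_iff.2 hg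
  refine le_of_mul_le_mul_right ?_ (Real.rpow_pos_of_pos hg' (q.toReal - 1))
  calc ‖g‖ * ‖g‖ ^ (q.toReal - 1) = lpMulPairing μ p q f g := by
        rw [hfg, Real.rpow_sub_one hg'.ne', mul_div_cancel₀ _ hg'.ne']
    _ ≤ ‖(lpMulPairing μ p q).flip g f‖ := Real.le_norm_self _
    _ ≤ ‖(lpMulPairing μ p q).flip g‖ * ‖g‖ ^ (q.toReal - 1) :=
        hf ▸ ContinuousLinearMap.le_opNorm _ _

lemma abs_setIntegral_le_norm_flip_lpMulPairing_mul (g : Lp ℝ ∞ μ) {s : Set Ω}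
    (hs : MeasurableSet s) (hμs : μ s ≠ ∞) :
    |∫ ω in s, g ω ∂μ| ≤ ‖(lpMulPairing μ 1 ∞).flip g‖ * μ.real s := by
  rw [← lpMulPairing_indicatorConstLp_one (p := 1) hs hμs]
  simpa [norm_indicatorConstLp] using
    ((lpMulPairing μ 1 ∞).flip g).le_opNorm (indicatorConstLp 1 hs hμs 1)

lemma norm_le_norm_flip_lpMulPairing_top [IsFiniteMeasure μ] (g : Lp ℝ ∞ μ) :
    ‖g‖ ≤ ‖(lpMulPairing μ 1 ∞).flip g‖ := by
  set M := ‖(lpMulPairing μ 1 ∞).flip g‖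
  have hg : Integrable g μ := (Lp.memLp g).integrable le_top
  have hM {s : Set Ω} (hs : MeasurableSet s) : |∫ ω in s, g ω ∂μ| ≤ ∫ _ in s, M ∂μ := by
    rw [setIntegral_const, smul_eq_mul, mul_comm]
    exact abs_setIntegral_le_norm_flip_lpMulPairing_mul g hs (measure_ne_top μ s)
  have hle : g ≤ᵐ[μ] fun _ ↦ M := ae_le_of_forall_setIntegral_le hg (integrable_const M)
    fun s hs _ ↦ (le_abs_self _).trans (hM hs)
  have hge : (fun _ ↦ -M) ≤ᵐ[μ] g := ae_le_of_forall_setIntegral_le (integrable_const _) hg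
    fun s hs _ ↦ by simpa only [integral_neg] using neg_le.1 ((neg_le_abs _).trans (hM hs))
  have hbound : ∀ᵐ ω ∂μ, ‖g ω‖ ≤ M := by
    filter_upwards [hle, hge] with ω h₁ h₂ using abs_le.2 ⟨h₂, h₁⟩
  simpa using Lp.norm_le_of_ae_bound (norm_nonneg _) hbound

lemma norm_le_norm_flip_lpMulPairing [IsFiniteMeasure μ] (hp : p ≠ ∞) (g : Lp ℝ q μ) :
    ‖g‖ ≤ ‖(lpMulPairing μ p q).flip g‖ := by
  rcases eq_or_ne q ∞ with rfl | hq
  · obtain rfl : p = 1 := (ENNReal.HolderConjugate.eq_top_iff_eq_one ∞ p).1 rfl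
    exact norm_le_norm_flip_lpMulPairing_top g
  · exact norm_le_norm_flip_lpMulPairing_of_ne_top hp hq g

end Pairing

section Riesz

variable {Ω : Type*} [MeasurableSpace Ω] {μ : Measure Ω} [IsFiniteMeasure μ] {p q : ℝ≥0∞}
  [Fact (1 ≤ p)] [Fact (1 ≤ q)]

open scoped Classical in
/-- The signed measure `s ↦ φ 1_s` of a functional `φ` on `L^p`, whose Radon–Nikodym derivative
is the function representing `φ`. -/
noncomputable def functionalSignedMeasure (hp : p ≠ ∞) (φ : Lp ℝ p μ →L[ℝ] ℝ) :
    SignedMeasure Ω where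
  measureOf' s :=
    if hs : MeasurableSet s then φ (indicatorConstLp p hs (measure_ne_top μ s) 1) else 0
  empty' := by simp
  not_measurable' _ hs := dif_neg hs
  m_iUnion' s hs hd := by
    simpa only [hs, MeasurableSet.iUnion hs, dif_pos] using
      (hasSum_indicatorConstLp hp hs hd (measure_ne_top μ _) 1).mapL φ

lemma functionalSignedMeasure_apply (hp : p ≠ ∞) (φ : Lp ℝ p μ →L[ℝ] ℝ) {s : Set Ω}
    (hs : MeasurableSet s) :
    functionalSignedMeasure hp φ s = φ (indicatorConstLp p hs (measure_ne_top μ s) 1) :=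
  dif_pos hs

lemma functionalSignedMeasure_absolutelyContinuous (hp : p ≠ ∞) (φ : Lp ℝ p μ →L[ℝ] ℝ) :
    functionalSignedMeasure hp φ ≪ᵥ μ.toENNRealVectorMeasure := by
  refine .mk fun s hs hμs ↦ ?_
  rw [Measure.toENNRealVectorMeasure_apply_measurable hs] at hμs
  rw [functionalSignedMeasure_apply hp φ hs,
    (indicatorConstLp_eq_zero_iff hs (measure_ne_top μ s) one_ne_zero).2 hμs, map_zero]

lemma exists_integrable_forall_apply_indicatorConstLp_eq (hp : p ≠ ∞) (φ : Lp ℝ p μ →L[ℝ] ℝ) :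
    ∃ g : Ω → ℝ, Measurable g ∧ Integrable g μ ∧ ∀ s (hs : MeasurableSet s),
      φ (indicatorConstLp p hs (measure_ne_top μ s) 1) = ∫ ω in s, g ω ∂μ := by
  set ν := functionalSignedMeasure hp φ
  refine ⟨ν.rnDeriv μ, ν.measurable_rnDeriv μ, ν.integrable_rnDeriv μ, fun s hs ↦ ?_⟩
  rw [← functionalSignedMeasure_apply hp φ hs, ← withDensityᵥ_apply (ν.integrable_rnDeriv μ) hs,
    SignedMeasure.withDensityᵥ_rnDeriv_eq ν μ
      (functionalSignedMeasure_absolutelyContinuous hp φ)]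

variable [p.HolderConjugate q]

lemma flip_lpMulPairing_toLp_indicator_eq_comp (hp : p ≠ ∞) {φ : Lp ℝ p μ →L[ℝ] ℝ} {g : Ω → ℝ}
    (hφ : ∀ s (hs : MeasurableSet s),
      φ (indicatorConstLp p hs (measure_ne_top μ s) 1) = ∫ ω in s, g ω ∂μ)
    {A : Set Ω} (hA : MeasurableSet A) (hgA : MemLp (A.indicator g) q μ) :
    (lpMulPairing μ p q).flip (hgA.toLp _) = φ.comp (indicatorMulLp hA (measure_ne_top μ A)) := by
  refine clm_ext_indicatorConstLp hp fun s hs hμs ↦ ?_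
  rw [ContinuousLinearMap.flip_apply, lpMulPairing_indicatorConstLp_one,
    ContinuousLinearMap.comp_apply, indicatorMulLp_indicatorConstLp_one, hφ,
    ← setIntegral_indicator hA]
  exact integral_congr_ae (ae_restrict_of_ae hgA.coeFn_toLp)

lemma eLpNorm_indicator_norm_le_natCast_le_norm (hp : p ≠ ∞) {φ : Lp ℝ p μ →L[ℝ] ℝ} {g : Ω → ℝ}
    (hg : Measurable g) (hφ : ∀ s (hs : MeasurableSet s),
      φ (indicatorConstLp p hs (measure_ne_top μ s) 1) = ∫ ω in s, g ω ∂μ) (n : ℕ) :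
    eLpNorm ({ω | ‖g ω‖ ≤ n}.indicator g) q μ ≤ ENNReal.ofReal ‖φ‖ := by
  set A := {ω | ‖g ω‖ ≤ n}
  have hA : MeasurableSet A := hg.norm measurableSet_Iic
  have hgA : MemLp (A.indicator g) q μ := by
    refine .of_bound (hg.indicator hA).aestronglyMeasurable n (.of_forall fun ω ↦ ?_)
    rw [norm_indicator_eq_indicator_norm]
    exact Set.indicator_apply_le' id fun _ ↦ n.cast_nonneg
  rw [← ENNReal.ofReal_toReal hgA.eLpNorm_ne_top, ← Lp.norm_toLp _ hgA]
  refine ENNReal.ofReal_le_ofReal ?_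
  calc ‖hgA.toLp _‖ ≤ ‖(lpMulPairing μ p q).flip (hgA.toLp _)‖ :=
        norm_le_norm_flip_lpMulPairing hp _
    _ = ‖φ.comp (indicatorMulLp hA (measure_ne_top μ A))‖ := by
        rw [flip_lpMulPairing_toLp_indicator_eq_comp hp hφ hA hgA]
    _ ≤ ‖φ‖ * 1 := (φ.opNorm_comp_le _).trans
        (mul_le_mul_of_nonneg_left (norm_indicatorMulLp_le _ _) (norm_nonneg φ))
    _ = ‖φ‖ := mul_one _

theorem flip_lpMulPairing_surjective (hp : p ≠ ∞) :
    Function.Surjective (lpMulPairing μ p q).flip := by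
  intro φ
  obtain ⟨g, hg, -, hφ⟩ := exists_integrable_forall_apply_indicatorConstLp_eq hp φ
  have hgq : MemLp g q μ := ⟨hg.aestronglyMeasurable,
    (eLpNorm_le_of_forall_nat_eLpNorm_indicator_le hg.stronglyMeasurable
      (eLpNorm_indicator_norm_le_natCast_le_norm hp hg hφ)).trans_lt ENNReal.ofReal_lt_top⟩
  refine ⟨hgq.toLp g, clm_ext_indicatorConstLp hp fun s hs hμs ↦ ?_⟩
  rw [ContinuousLinearMap.flip_apply, lpMulPairing_indicatorConstLp_one, hφ]
  exact integral_congr_ae (ae_restrict_of_ae hgq.coeFn_toLp)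

end Riesz

section PolarCone

variable {E F : Type*} [NormedAddCommGroup E] [NormedSpace ℝ E] [NormedAddCommGroup F]
  [NormedSpace ℝ F]

/-- The polar cone `{y | ∀ x ∈ C, B x y ≤ 0}` of `C` for a pairing `B`, encoded as the dual cone for
`-B`. -/
noncomputable def polarCone (B : E →L[ℝ] F →L[ℝ] ℝ) (C : Set E) : ProperCone ℝ F where
  toSubmodule := PointedCone.dual (-B).toLinearMap₁₂ C
  isClosed' := PointedCone.isClosed_dual fun x ↦ (-B x).continuous

lemma mem_polarCone {B : E →L[ℝ] F →L[ℝ] ℝ} {C : Set E} {y : F} :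
    y ∈ polarCone B C ↔ ∀ x ∈ C, B x y ≤ 0 :=
  forall₂_congr fun _ _ ↦ neg_nonneg

lemma exists_mem_polarCone_pos {B : E →L[ℝ] F →L[ℝ] ℝ} (hB : Function.Surjective B.flip)
    {C : ProperCone ℝ E} {x : E} (hx : x ∉ C) : ∃ y ∈ polarCone B C, 0 < B x y := by
  obtain ⟨φ, hφC, hφx⟩ := C.hyperplane_separation_point hx
  obtain ⟨y, hy⟩ := hB (-φ)
  have hBy (z : E) : B z y = -φ z := DFunLike.congr_fun hy z
  refine ⟨y, mem_polarCone.2 fun z hz ↦ ?_, ?_⟩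
  · simpa only [hBy, neg_nonpos] using hφC z hz
  · simpa only [hBy, neg_pos] using hφx

end PolarCone

section Exhaustion

lemma exists_mem_forall_exists_smul_le {E : Type*} [NormedAddCommGroup E] [NormedSpace ℝ E]
    [CompleteSpace E] [PartialOrder E] [IsOrderedAddMonoid E] [OrderClosedTopology E]
    {K : ProperCone ℝ E} (hK : ∀ x ∈ K, 0 ≤ x) {x : ℕ → E} (hx : ∀ n, x n ∈ K) :
    ∃ y ∈ K, ∀ n, ∃ c : ℝ, 0 < c ∧ c • x n ≤ y := by
  set c : ℕ → ℝ := fun n ↦ (1 / 2) ^ n / (1 + ‖x n‖)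
  have hc (n : ℕ) : 0 < c n := by positivity
  have hmem (n : ℕ) : c n • x n ∈ K := K.smul_mem (hx n) (hc n).le
  have hnorm (n : ℕ) : ‖c n • x n‖ ≤ (1 / 2) ^ n := by
    rw [norm_smul, Real.norm_of_nonneg (hc n).le, div_mul_eq_mul_div, mul_div_assoc]
    exact mul_le_of_le_one_right (by positivity)
      (div_le_one_of_le₀ (le_add_of_nonneg_left zero_le_one) (by positivity))
  have hsum : Summable fun n ↦ c n • x n := .of_norm_bounded summable_geometric_two hnorm
  exact ⟨∑' n, c n • x n, tsum_mem K.isClosed hmem,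
    fun n ↦ ⟨c n, hc n, hsum.le_tsum n fun m _ ↦ hK _ (hmem m)⟩⟩

variable {Ω : Type*} [MeasurableSpace Ω] {μ : Measure Ω} {q : ℝ≥0∞}

lemma ae_pos_of_smul_le_of_pos {f g : Lp ℝ q μ} {c : ℝ} (hc : 0 < c) (hfg : c • f ≤ g) :
    ∀ᵐ ω ∂μ, 0 < f ω → 0 < g ω := by
  filter_upwards [Lp.coeFn_smul c f, (Lp.coeFn_le _ _).2 hfg] with ω hsmul hle hf
  rw [hsmul] at hle
  exact (mul_pos hc hf).trans_le hle

variable [Fact (1 ≤ q)] {K : ProperCone ℝ (Lp ℝ q μ)}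

lemma exists_mem_forall_measure_pos_le (hK : ∀ g ∈ K, 0 ≤ g) :
    ∃ k ∈ K, ∀ g ∈ K, μ {ω | 0 < g ω} ≤ μ {ω | 0 < k ω} := by
  set S : Set ℝ≥0∞ := (fun g : Lp ℝ q μ ↦ μ {ω | 0 < g ω}) '' K
  obtain ⟨u, -, hu, hmem⟩ := exists_seq_tendsto_sSup (S := S) ⟨_, 0, K.zero_mem, rfl⟩
    (OrderTop.bddAbove S)
  choose g hg hgu using hmem
  obtain ⟨k, hk, hle⟩ := exists_mem_forall_exists_smul_le hK hg
  have hsup {f : Lp ℝ q μ} (hf : f ∈ K) : μ {ω | 0 < f ω} ≤ sSup S := le_sSup ⟨f, hf, rfl⟩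
  refine ⟨k, hk, fun f hf ↦ (hsup hf).trans (le_of_tendsto' hu fun n ↦ ?_)⟩
  obtain ⟨c, hc, hcn⟩ := hle n
  exact hgu n ▸ measure_mono_ae (ae_pos_of_smul_le_of_pos hc hcn)

lemma ae_pos_of_pos_of_forall_measure_pos_le [IsFiniteMeasure μ] (hK : ∀ g ∈ K, 0 ≤ g)
    {k g : Lp ℝ q μ} (hk : k ∈ K) (hmax : ∀ f ∈ K, μ {ω | 0 < f ω} ≤ μ {ω | 0 < k ω})
    (hg : g ∈ K) : ∀ᵐ ω ∂μ, 0 < g ω → 0 < k ω := by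
  have hpos {f : Lp ℝ q μ} (hf : f ≤ k + g) : ∀ᵐ ω ∂μ, 0 < f ω → 0 < (k + g) ω :=
    ae_pos_of_smul_le_of_pos one_pos (by rwa [one_smul])
  have hmeas : NullMeasurableSet {ω | 0 < k ω} μ :=
    (measurableSet_lt measurable_const (Lp.stronglyMeasurable k).measurable).nullMeasurableSet
  have heq : {ω | 0 < k ω} =ᵐ[μ] {ω | 0 < (k + g) ω} :=
    ae_eq_of_ae_subset_of_measure_ge (hpos (le_add_of_nonneg_right (hK g hg)))
      (hmax _ (K.add_mem hk hg)) hmeas (measure_ne_top μ _)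
  filter_upwards [hpos (le_add_of_nonneg_left (hK k hk)), heq.mem_iff] with ω hadd hiff hgω
  exact hiff.2 (hadd hgω)

lemma exists_mem_ae_pos [IsFiniteMeasure μ] (hK : ∀ g ∈ K, 0 ≤ g)
    (hpos : ∀ A, MeasurableSet A → μ A ≠ 0 → ∃ g ∈ K, ∃ᵐ ω ∂μ, ω ∈ A ∧ 0 < g ω) :
    ∃ k ∈ K, ∀ᵐ ω ∂μ, 0 < k ω := by
  obtain ⟨k, hk, hmax⟩ := exists_mem_forall_measure_pos_le hK
  refine ⟨k, hk, ?_⟩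
  by_contra hne
  have hmeas : MeasurableSet {ω | 0 < k ω}ᶜ :=
    (measurableSet_lt measurable_const (Lp.stronglyMeasurable k).measurable).compl
  obtain ⟨g, hg, hfreq⟩ := hpos _ hmeas fun h ↦ hne h
  refine hfreq ((ae_pos_of_pos_of_forall_measure_pos_le hK hk hmax hg).mono ?_)
  rintro ω hω ⟨hkω, hgω⟩
  exact hkω (hω hgω)

end Exhaustion

section KrepsYan

variable {Ω : Type*} [MeasurableSpace Ω] {μ : Measure Ω} [IsFiniteMeasure μ] {p q : ℝ≥0∞}
  [Fact (1 ≤ p)] [Fact (1 ≤ q)]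

lemma integrable_coeFn_Lp (g : Lp ℝ q μ) : Integrable g μ := (Lp.memLp g).integrable Fact.out

lemma exists_pos_integral_smul_eq_one [NeZero μ] {k : Lp ℝ q μ} (hk : ∀ᵐ ω ∂μ, 0 < k ω) :
    ∃ c : ℝ, 0 < c ∧ ∫ ω, (c • k) ω ∂μ = 1 := by
  have hint : 0 < ∫ ω, k ω ∂μ := by
    rw [integral_pos_iff_support_of_nonneg_ae (hk.mono fun _ h ↦ h.le) (integrable_coeFn_Lp k),
      measure_congr (s := Function.support k) (eventuallyEq_univ.2 (hk.mono fun _ h ↦ h.ne'))]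
    exact Measure.measure_univ_pos.2 (NeZero.ne μ)
  refine ⟨_, inv_pos.2 hint, ?_⟩
  rw [integral_congr_ae (Lp.coeFn_smul _ k)]
  simpa only [Pi.smul_apply, smul_eq_mul, integral_const_mul] using inv_mul_cancel₀ hint.ne'

variable [p.HolderConjugate q]

lemma nonneg_of_mem_polarCone_lpMulPairing {C : Set (Lp ℝ p μ)} (hneg : ∀ h, 0 ≤ h → -h ∈ C)
    {g : Lp ℝ q μ} (hg : g ∈ polarCone (lpMulPairing μ p q) C) : 0 ≤ g := by
  rw [← Lp.coeFn_nonneg]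
  refine ae_nonneg_of_forall_setIntegral_nonneg (integrable_coeFn_Lp g) fun s hs hμs ↦ ?_
  have h := mem_polarCone.1 hg _ (hneg _ (indicatorConstLp_nonneg hs hμs.ne zero_le_one))
  rwa [map_neg, neg_apply, neg_nonpos,
    lpMulPairing_indicatorConstLp_one] at h

lemma exists_mem_polarCone_frequently_pos (hp : p ≠ ∞) {C : ProperCone ℝ (Lp ℝ p μ)}
    (hpos : ∀ h ∈ C, 0 ≤ h → h = 0) {A : Set Ω} (hA : MeasurableSet A) (hμA : μ A ≠ 0) :
    ∃ g ∈ polarCone (lpMulPairing μ p q) C, ∃ᵐ ω ∂μ, ω ∈ A ∧ 0 < g ω := by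
  have hAC : indicatorConstLp p hA (measure_ne_top μ A) 1 ∉ C := fun hmem ↦
    hμA <| (indicatorConstLp_eq_zero_iff hA (measure_ne_top μ A) one_ne_zero).1 <|
      hpos _ hmem (indicatorConstLp_nonneg hA (measure_ne_top μ A) zero_le_one)
  obtain ⟨g, hg, hint⟩ := exists_mem_polarCone_pos (flip_lpMulPairing_surjective (q := q) hp) hAC
  refine ⟨g, hg, fun hnot ↦ hint.not_ge ?_⟩
  rw [lpMulPairing_indicatorConstLp_one]
  refine setIntegral_nonpos_ae hA (hnot.mono fun ω hω hωA ↦ ?_)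
  exact not_lt.1 fun hgω ↦ hω ⟨hωA, hgω⟩

theorem kreps_yan_existence_general [NeZero μ] (hp : p ≠ ∞) (C : ProperCone ℝ (Lp ℝ p μ))
    (hneg : ∀ h : Lp ℝ p μ, 0 ≤ h → -h ∈ C) (hpos : ∀ h ∈ C, 0 ≤ h → h = 0) :
    ∃ g : Lp ℝ q μ, (∀ᵐ ω ∂μ, 0 < g ω) ∧ ∫ ω, g ω ∂μ = 1 ∧
      ∀ h ∈ C, ∫ ω, h ω * g ω ∂μ ≤ 0 := by
  obtain ⟨k, hkC, hk⟩ := exists_mem_ae_pos (K := polarCone (lpMulPairing μ p q) C)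
    (fun _ ↦ nonneg_of_mem_polarCone_lpMulPairing hneg)
    fun _ ↦ exists_mem_polarCone_frequently_pos hp hpos
  obtain ⟨c, hc, hint⟩ := exists_pos_integral_smul_eq_one hk
  refine ⟨c • k, ?_, hint, fun h hh ↦ ?_⟩
  · filter_upwards [Lp.coeFn_smul c k, hk] with ω hsmul hω
    exact hsmul ▸ mul_pos hc hω
  · rw [← lpMulPairing_apply]
    exact mem_polarCone.1 (ProperCone.smul_mem _ hkC hc.le) h hh

end KrepsYan

/-- abstract Kreps–Yan theorem, existence direction.  Let
`C ⊆ L^p` be a norm-closed convex cone containing `0` and `−L^p_+`, with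
`C ∩ L^p_+ = {0}`.  Then there is `g ∈ L^q` with `g > 0` a.e., `𝔼[g] = 1` and
`⟨h,g⟩ ≤ 0` for all `h ∈ C`; i.e. `dℚ/dℙ := g` defines an equivalent
probability measure with `L^q`-density under which every `h ∈ C` has
nonpositive expectation. -/
theorem kreps_yan_existence
    {Ω : Type*} [MeasurableSpace Ω] (P : Measure Ω) [IsProbabilityMeasure P]
    (p q : ℝ) (hp : 1 < p) (hq : 1 ≤ q) (hpq : 1 / p + 1 / q = 1)
    [Fact (1 ≤ ENNReal.ofReal p)] [Fact (1 ≤ ENNReal.ofReal q)]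
    (C : Set (Lp ℝ (ENNReal.ofReal p) P))
    (hclosed : IsClosed C)
    (hzero : (0 : Lp ℝ (ENNReal.ofReal p) P) ∈ C)
    (hadd : ∀ x ∈ C, ∀ y ∈ C, x + y ∈ C)
    (hsmul : ∀ c : ℝ, 0 ≤ c → ∀ x ∈ C, c • x ∈ C)
    (hneg : ∀ h : Lp ℝ (ENNReal.ofReal p) P,
      (0 : Ω → ℝ) ≤ᵐ[P] (h : Ω → ℝ) → -h ∈ C)
    (hpos : ∀ h ∈ C, (0 : Ω → ℝ) ≤ᵐ[P] (h : Ω → ℝ) → h = 0) :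
    ∃ g : Lp ℝ (ENNReal.ofReal q) P,
      (∀ᵐ ω ∂P, 0 < (g : Ω → ℝ) ω) ∧
      (∫ ω, (g : Ω → ℝ) ω ∂P) = 1 ∧
      (∀ h ∈ C, (∫ ω, (h : Ω → ℝ) ω * (g : Ω → ℝ) ω ∂P) ≤ 0) := by
  have : (ENNReal.ofReal p).HolderConjugate (ENNReal.ofReal q) :=
    (Real.holderConjugate_iff.2 ⟨hp, by simpa only [one_div] using hpq⟩).ennrealOfReal
  let K : ProperCone ℝ (Lp ℝ (ENNReal.ofReal p) P) :=
    { carrier := C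
      add_mem' := fun hx hy ↦ hadd _ hx _ hy
      zero_mem' := hzero
      smul_mem' := fun c _ hx ↦ hsmul c c.2 _ hx
      isClosed' := hclosed }
  exact kreps_yan_existence_general ENNReal.ofReal_ne_top K
    (fun h hh ↦ hneg h ((Lp.coeFn_nonneg h).2 hh))
    fun h hhC hh ↦ hpos h hhC ((Lp.coeFn_nonneg h).2 hh)
end
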